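/- Let 0 < q < 1, p > 1, α > 0, and set E = (∑_{n=0}^∞ q^{n/p'} (q^{n+1}; q)_{α-1})^p with 1/p + 1/p' = 1. For every sequence (a_n)_{n≥0} of nonnegative reals, ∑_{n=0}^∞ (q^{-n/p'} ∑_{k=n}^∞ (q^{k-n+1}; q)_{α-1} q^{k/p'} a_k)^p ≤ E ∑_{n=0}^∞ a_n^p. -/

import Mathlib

open scoped ENNReal

/-- The infinite q-Pochhammer symbol `(a; q)_∞ = ∏_{i≥0} (1 - a qⁱ)`. -/
noncomputable def qPochInf (a q : ℝ) : ℝ := ∏' i : ℕ, (1 - a * q ^ i)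

/-- The q-Pochhammer symbol `(a; q)_β = (a;q)_∞ / (a q^β; q)_∞`. -/
noncomputable def qPoch (a q β : ℝ) : ℝ := qPochInf a q / qPochInf (a * q ^ β) q

/-!
Put `K m = q ^ (m / p') * (q ^ (m + 1); q)_{α - 1}`. The two powers of `q` in the matrix combine to
`q ^ (m / p')` with `m = k - n`, so the matrix is `∑ K m • Sᵐ`, where `S` is the left shift. Since
`S` is a contraction of `ℓᵖ` and `K ≥ 0`, the norm is at most `∑ K m`. As `(q ^ (m + 1); q)_{α - 1}`
is bounded in `m`, this series is dominated by a geometric one, hence the real sum in the constant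
is a genuine one.
-/

section WeightedSums

variable {ι κ μ : Type*} {p : ℝ}

theorem inner_le_weight_mul_Lp_tsum (hp : 1 ≤ p) (w f : ι → ℝ≥0∞) :
    ∑' i, w i * f i ≤ (∑' i, w i) ^ (1 - p⁻¹) * (∑' i, w i * f i ^ p) ^ p⁻¹ := by
  rw [ENNReal.tsum_eq_iSup_sum]
  refine iSup_le fun s ↦ (ENNReal.inner_le_weight_mul_Lp_of_nonneg s hp w f).trans ?_
  have hp_inv : p⁻¹ ≤ 1 := inv_le_one_of_one_le₀ hp
  exact mul_le_mul' (ENNReal.rpow_le_rpow (ENNReal.sum_le_tsum s) (by linarith))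
    (ENNReal.rpow_le_rpow (ENNReal.sum_le_tsum s) (by positivity))

theorem rpow_tsum_mul_le_tsum_mul_rpow (hp : 1 ≤ p) (w f : ι → ℝ≥0∞) :
    (∑' i, w i * f i) ^ p ≤ (∑' i, w i) ^ (p - 1) * ∑' i, w i * f i ^ p := by
  have hp₀ : 0 < p := by linarith
  calc (∑' i, w i * f i) ^ p
      ≤ ((∑' i, w i) ^ (1 - p⁻¹) * (∑' i, w i * f i ^ p) ^ p⁻¹) ^ p :=
        ENNReal.rpow_le_rpow (inner_le_weight_mul_Lp_tsum hp w f) hp₀.le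
    _ = (∑' i, w i) ^ (p - 1) * ∑' i, w i * f i ^ p := by
        rw [ENNReal.mul_rpow_of_nonneg _ _ hp₀.le, ← ENNReal.rpow_mul,
          ENNReal.rpow_inv_rpow hp₀.ne', sub_mul, one_mul, inv_mul_cancel₀ hp₀.ne']

theorem tsum_rpow_tsum_mul_comp_le (hp : 1 ≤ p) (w : ι → ℝ≥0∞) {τ : ι → κ → μ}
    (hτ : ∀ i, (τ i).Injective) (a : μ → ℝ≥0∞) :
    ∑' k, (∑' i, w i * a (τ i k)) ^ p ≤ (∑' i, w i) ^ p * ∑' j, a j ^ p :=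
  calc ∑' k, (∑' i, w i * a (τ i k)) ^ p
      ≤ ∑' k, (∑' i, w i) ^ (p - 1) * ∑' i, w i * a (τ i k) ^ p :=
        ENNReal.tsum_le_tsum fun k ↦ rpow_tsum_mul_le_tsum_mul_rpow hp w fun i ↦ a (τ i k)
    _ = (∑' i, w i) ^ (p - 1) * ∑' i, w i * ∑' k, a (τ i k) ^ p := by
        rw [ENNReal.tsum_mul_left, ENNReal.tsum_comm]
        simp_rw [ENNReal.tsum_mul_left]
    _ ≤ (∑' i, w i) ^ (p - 1) * ∑' i, w i * ∑' j, a j ^ p := by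
        gcongr with i
        exact ENNReal.tsum_comp_le_tsum_of_injective (hτ i) (a · ^ p)
    _ = (∑' i, w i) ^ (p - 1) * (∑' i, w i) ^ (1 : ℝ) * ∑' j, a j ^ p := by
        rw [ENNReal.tsum_mul_right, ENNReal.rpow_one, mul_assoc]
    _ = (∑' i, w i) ^ p * ∑' j, a j ^ p := by
        rw [← ENNReal.rpow_add_of_nonneg _ _ (sub_nonneg.2 hp) zero_le_one, sub_add_cancel]

end WeightedSums

section QPochhammer

variable {q a b β : ℝ}

@[simp]
theorem qPochInf_zero_left (q : ℝ) : qPochInf 0 q = 1 := by simp [qPochInf]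

theorem summable_log_one_sub_mul_pow (hq : |q| < 1) (a : ℝ) :
    Summable fun i : ℕ ↦ Real.log (1 - a * q ^ i) := by
  simpa [sub_eq_add_neg] using Real.summable_log_one_add_of_summable
    ((summable_geometric_of_abs_lt_one hq).mul_left a).neg

theorem one_sub_mul_pow_pos (hq₀ : 0 ≤ q) (hq₁ : q ≤ 1) (ha : a < 1) (i : ℕ) :
    0 < 1 - a * q ^ i := by
  have hpow₀ : 0 ≤ q ^ i := pow_nonneg hq₀ i
  rcases le_total a 0 with ha₀ | ha₀
  · linarith [mul_nonpos_of_nonpos_of_nonneg ha₀ hpow₀]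
  · linarith [mul_le_of_le_one_right ha₀ (pow_le_one₀ hq₀ hq₁ (n := i))]

theorem qPochInf_eq_exp_tsum_log (hq₀ : 0 ≤ q) (hq₁ : q < 1) (ha : a < 1) :
    qPochInf a q = Real.exp (∑' i : ℕ, Real.log (1 - a * q ^ i)) :=
  (Real.rexp_tsum_eq_tprod (one_sub_mul_pow_pos hq₀ hq₁.le ha)
    (summable_log_one_sub_mul_pow ((abs_of_nonneg hq₀).trans_lt hq₁) a)).symm

theorem qPochInf_pos (hq₀ : 0 ≤ q) (hq₁ : q < 1) (ha : a < 1) : 0 < qPochInf a q := by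
  rw [qPochInf_eq_exp_tsum_log hq₀ hq₁ ha]
  exact Real.exp_pos _

theorem qPochInf_le_qPochInf (hq₀ : 0 ≤ q) (hq₁ : q < 1) (hab : a ≤ b) (hb : b < 1) :
    qPochInf b q ≤ qPochInf a q := by
  have hlog := summable_log_one_sub_mul_pow ((abs_of_nonneg hq₀).trans_lt hq₁)
  rw [qPochInf_eq_exp_tsum_log hq₀ hq₁ (hab.trans_lt hb), qPochInf_eq_exp_tsum_log hq₀ hq₁ hb]
  refine Real.exp_le_exp.2 ((hlog b).tsum_le_tsum (fun i ↦ ?_) (hlog a))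
  exact Real.log_le_log (one_sub_mul_pow_pos hq₀ hq₁.le hb i) (by gcongr)

theorem qPochInf_le_one (hq₀ : 0 ≤ q) (hq₁ : q < 1) (ha₀ : 0 ≤ a) (ha₁ : a < 1) :
    qPochInf a q ≤ 1 := by
  simpa using qPochInf_le_qPochInf hq₀ hq₁ ha₀ ha₁

theorem qPoch_pos (hq₀ : 0 ≤ q) (hq₁ : q < 1) (ha : a < 1) (haβ : a * q ^ β < 1) :
    0 < qPoch a q β :=
  div_pos (qPochInf_pos hq₀ hq₁ ha) (qPochInf_pos hq₀ hq₁ haβ)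

theorem qPoch_le_inv_qPochInf (hq₀ : 0 ≤ q) (hq₁ : q < 1) (ha₀ : 0 ≤ a) (ha₁ : a < 1)
    (haβ : a * q ^ β ≤ b) (hb : b < 1) : qPoch a q β ≤ (qPochInf b q)⁻¹ := by
  rw [← one_div]
  exact div_le_div₀ zero_le_one (qPochInf_le_one hq₀ hq₁ ha₀ ha₁) (qPochInf_pos hq₀ hq₁ hb)
    (qPochInf_le_qPochInf hq₀ hq₁ haβ hb)

end QPochhammer

/-- The sequence `q ^ (n / r) * (q ^ (n + 1); q)_{α - 1}`: the kernel of the discrete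
q-Riemann–Liouville operator of order `α` after conjugation by the weight `q ^ (n / r)`. -/
noncomputable def qRLKernel (q r α : ℝ) (n : ℕ) : ℝ :=
  q ^ ((n : ℝ) / r) * qPoch (q ^ ((n : ℝ) + 1)) q (α - 1)

section QRLKernel

variable {q r α p : ℝ}

theorem rpow_natCast_add_one_mul_rpow_sub_one_le (hq₀ : 0 < q) (hq₁ : q ≤ 1) (α : ℝ) (n : ℕ) :
    q ^ ((n : ℝ) + 1) * q ^ (α - 1) ≤ q ^ α := by
  rw [← Real.rpow_add hq₀]
  exact Real.rpow_le_rpow_of_exponent_ge hq₀ hq₁ (by linarith [n.cast_nonneg (α := ℝ)])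

theorem qRLKernel_pos (hq₀ : 0 < q) (hq₁ : q < 1) (hα : 0 < α) (r : ℝ) (n : ℕ) :
    0 < qRLKernel q r α n :=
  mul_pos (Real.rpow_pos_of_pos hq₀ _) <|
    qPoch_pos hq₀.le hq₁ (Real.rpow_lt_one hq₀.le hq₁ n.cast_add_one_pos) <|
      (rpow_natCast_add_one_mul_rpow_sub_one_le hq₀ hq₁.le α n).trans_lt
        (Real.rpow_lt_one hq₀.le hq₁ hα)

theorem qRLKernel_le (hq₀ : 0 < q) (hq₁ : q < 1) (hα : 0 < α) (r : ℝ) (n : ℕ) :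
    qRLKernel q r α n ≤ (q ^ r⁻¹) ^ n * (qPochInf (q ^ α) q)⁻¹ := by
  have hpow : q ^ ((n : ℝ) / r) = (q ^ r⁻¹) ^ n := by
    rw [← Real.rpow_mul_natCast hq₀.le, div_eq_inv_mul]
  rw [qRLKernel, hpow]
  gcongr
  exact qPoch_le_inv_qPochInf hq₀.le hq₁ (by positivity)
    (Real.rpow_lt_one hq₀.le hq₁ n.cast_add_one_pos)
    (rpow_natCast_add_one_mul_rpow_sub_one_le hq₀ hq₁.le α n) (Real.rpow_lt_one hq₀.le hq₁ hα)

theorem summable_qRLKernel (hq₀ : 0 < q) (hq₁ : q < 1) (hr : 0 < r) (hα : 0 < α) :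
    Summable (qRLKernel q r α) :=
  .of_nonneg_of_le (fun n ↦ (qRLKernel_pos hq₀ hq₁ hα r n).le) (qRLKernel_le hq₀ hq₁ hα r) <|
    (summable_geometric_of_lt_one (by positivity)
      (Real.rpow_lt_one hq₀.le hq₁ (inv_pos.2 hr))).mul_right _

theorem ofReal_rpow_tsum_qRLKernel (hq₀ : 0 < q) (hq₁ : q < 1) (hr : 0 < r) (hα : 0 < α)
    (hp : 0 ≤ p) :
    ENNReal.ofReal ((∑' n, qRLKernel q r α n) ^ p) =
      (∑' n, ENNReal.ofReal (qRLKernel q r α n)) ^ p := by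
  have hK (n : ℕ) : 0 ≤ qRLKernel q r α n := (qRLKernel_pos hq₀ hq₁ hα r n).le
  rw [← ENNReal.ofReal_rpow_of_nonneg (tsum_nonneg hK) hp,
    ENNReal.ofReal_tsum_of_nonneg hK (summable_qRLKernel hq₀ hq₁ hr hα)]

theorem rpow_mul_tsum_qPoch_eq_tsum_qRLKernel (hq : 0 < q) (r α : ℝ) (a : ℕ → ℝ≥0∞) (n : ℕ) :
    ENNReal.ofReal q ^ (-(n : ℝ) / r) *
        ∑' m : ℕ, ENNReal.ofReal (qPoch (q ^ ((m : ℝ) + 1)) q (α - 1)) *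
          ENNReal.ofReal q ^ (((n : ℝ) + (m : ℝ)) / r) * a (n + m) =
      ∑' m, ENNReal.ofReal (qRLKernel q r α m) * a (n + m) := by
  rw [← ENNReal.tsum_mul_left]
  refine tsum_congr fun m ↦ ?_
  have hweight : ENNReal.ofReal q ^ (-(n : ℝ) / r) *
      ENNReal.ofReal q ^ (((n : ℝ) + (m : ℝ)) / r) = ENNReal.ofReal (q ^ ((m : ℝ) / r)) := by
    rw [← ENNReal.rpow_add _ _ (ENNReal.ofReal_pos.2 hq).ne' ENNReal.ofReal_ne_top,
      ENNReal.ofReal_rpow_of_pos hq, ← add_div, neg_add_cancel_left]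
  rw [qRLKernel, ENNReal.ofReal_mul (by positivity), ← hweight]
  ring

end QRLKernel

theorem matrix_inequality_N_general (q p r α : ℝ) (hq : 0 < q) (hq1 : q < 1) (hp : 1 ≤ p)
    (hα : 0 < α) (hr : 0 < r) (a : ℕ → ℝ≥0∞) :
    ∑' n : ℕ, ((ENNReal.ofReal q) ^ (-(n : ℝ) / r) *
        ∑' m : ℕ, ENNReal.ofReal (qPoch (q ^ ((m : ℝ) + 1)) q (α - 1)) *
          (ENNReal.ofReal q) ^ (((n : ℝ) + (m : ℝ)) / r) * a (n + m)) ^ p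
      ≤ ENNReal.ofReal
          ((∑' n : ℕ, q ^ ((n : ℝ) / r) * qPoch (q ^ ((n : ℝ) + 1)) q (α - 1)) ^ p) *
        ∑' n : ℕ, (a n) ^ p := by
  change _ ≤ ENNReal.ofReal ((∑' n, qRLKernel q r α n) ^ p) * _
  simp only [rpow_mul_tsum_qPoch_eq_tsum_qRLKernel hq]
  rw [ofReal_rpow_tsum_qRLKernel hq hq1 hr hα (zero_le_one.trans hp)]
  exact tsum_rpow_tsum_mul_comp_le hp _ add_left_injective a

theorem matrix_inequality_N (q p p' α : ℝ) (hq : 0 < q) (hq1 : q < 1) (hp : 1 < p)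
    (hα : 0 < α) (hp' : 1 / p + 1 / p' = 1) (a : ℕ → ℝ≥0∞) :
    ∑' n : ℕ, ((ENNReal.ofReal q) ^ (-(n : ℝ) / p') *
        ∑' m : ℕ, ENNReal.ofReal (qPoch (q ^ ((m : ℝ) + 1)) q (α - 1)) *
          (ENNReal.ofReal q) ^ (((n : ℝ) + (m : ℝ)) / p') * a (n + m)) ^ p
      ≤ ENNReal.ofReal
          ((∑' n : ℕ, q ^ ((n : ℝ) / p') * qPoch (q ^ ((n : ℝ) + 1)) q (α - 1)) ^ p) *
        ∑' n : ℕ, (a n) ^ p := by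
  have hpp' : p.HolderConjugate p' := Real.holderConjugate_iff.2 ⟨hp, by simpa using hp'⟩
  exact matrix_inequality_N_general q p p' α hq hq1 hp.le hα hpp'.symm.pos a
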